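/- Genie-aided equality (Appendix B): The region R_{ed,f,f} of achievable cost pairs for control designs in which the causal encoder has strictly causal channel feedback Y_1^{t−1} AND the causal decoder additionally receives the strictly causal source feed-forward X_0^{t−1} equals the region R_ed for causal encoder and causal decoder without feedback or feed-forward: R_{ed,f,f} = R_ed. In particular, since R_{ed,f,f} ⊇ R_{ed,f} ⊇ R_ed, adding channel feedback and source feed-forward does not enlarge the achievable region. -/

import Mathlib

/-!
Formalization of results from "Causal Vector-valued Witsenhausen Counterexamples with
Feedback" (Zhao, Le Treust, Oechtering).

Stochastic encoders/decoders (stochastic kernels) are realized as measurable functions of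
independent i.i.d. randomization seeds, which is equivalent to the kernel formulation on
standard Borel spaces.
-/

open MeasureTheory ProbabilityTheory
open scoped ENNReal NNReal

namespace Witsenhausen

noncomputable section

/-- A path (block of length `n`) of real values. -/
abbrev Path (n : ℕ) : Type := Fin n → ℝ

/-- i.i.d. centered Gaussian vector of length `n` and variance `v`. -/
def iidGaussian (n : ℕ) (v : ℝ≥0) : Measure (Path n) :=
  Measure.pi fun _ => gaussianReal 0 v

instance (n : ℕ) (v : ℝ≥0) : IsProbabilityMeasure (iidGaussian n v) := by
  unfold iidGaussian; infer_instance

/-- Canonical sample space: source `X₀ⁿ`, channel noise `Z₁ⁿ`, and the randomization seeds of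
the (stochastic) encoder and decoder. -/
abbrev Sample (n : ℕ) : Type := Path n × Path n × Path n × Path n

/-- The base randomness: the i.i.d. `N(0,Q)` source `X₀ⁿ`, the independent i.i.d. `N(0,N)`
channel noise `Z₁ⁿ`, and independent i.i.d. randomization seeds for the stochastic encoder
and decoder. -/
def base (n : ℕ) (Q N : ℝ≥0) : Measure (Sample n) :=
  (iidGaussian n Q).prod ((iidGaussian n N).prod
    ((iidGaussian n 1).prod (iidGaussian n 1)))

instance (n : ℕ) (Q N : ℝ≥0) : IsProbabilityMeasure (base n Q N) := by
  unfold base; infer_instance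

/-- The source sequence `X₀ⁿ`. -/
def srcX0 {n : ℕ} (ω : Sample n) : Path n := ω.1
/-- The channel noise sequence `Z₁ⁿ`. -/
def noiseZ {n : ℕ} (ω : Sample n) : Path n := ω.2.1
/-- The encoder randomization seeds. -/
def seedV {n : ℕ} (ω : Sample n) : Path n := ω.2.2.1
/-- The decoder randomization seeds. -/
def seedW {n : ℕ} (ω : Sample n) : Path n := ω.2.2.2

/-- The long-run input cost `c_P(u₁ⁿ) = (1/n) ∑_t u_{1,t}²`. -/
def costP {n : ℕ} (u : Path n) : ℝ := (1 / (n : ℝ)) * ∑ t, (u t) ^ 2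

/-- The long-run estimation cost `c_S(x₁ⁿ, u₂ⁿ) = (1/n) ∑_t (x_{1,t} - u_{2,t})²`. -/
def costS {n : ℕ} (x u : Path n) : ℝ := (1 / (n : ℝ)) * ∑ t, (x t - u t) ^ 2

/-- A control design with causal encoder and causal decoder: at each time `t` the stochastic
encoder `f^t` observes `X₀^t` and the stochastic decoder `g^t` observes `Y₁^t` (stochastic
maps are realized as measurable functions of independent randomization seeds). -/
structure Design (n : ℕ) where
  enc : Fin n → Path n → ℝ → ℝ
  dec : Fin n → Path n → ℝ → ℝ
  enc_meas : ∀ t, Measurable fun p : Path n × ℝ => enc t p.1 p.2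
  dec_meas : ∀ t, Measurable fun p : Path n × ℝ => dec t p.1 p.2
  /-- causal encoding: `U_{1,t}` depends on the source only through `X₀^t`. -/
  enc_causal : ∀ (t : Fin n) (x x' : Path n) (v : ℝ),
    (∀ s, s ≤ t → x s = x' s) → enc t x v = enc t x' v
  /-- causal decoding: `U_{2,t}` depends on the channel output only through `Y₁^t`. -/
  dec_causal : ∀ (t : Fin n) (y y' : Path n) (w : ℝ),
    (∀ s, s ≤ t → y s = y' s) → dec t y w = dec t y' w

namespace Design

variable {n : ℕ} (c : Design n)

/-- The control sequence `U₁ⁿ`. -/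
def U1 (ω : Sample n) : Path n := fun t => c.enc t (srcX0 ω) (seedV ω t)
/-- The interim state `X₁ⁿ = X₀ⁿ + U₁ⁿ`. -/
def X1 (ω : Sample n) : Path n := fun t => srcX0 ω t + c.U1 ω t
/-- The channel output `Y₁ⁿ = X₁ⁿ + Z₁ⁿ`. -/
def Y1 (ω : Sample n) : Path n := fun t => c.X1 ω t + noiseZ ω t
/-- The estimate sequence `U₂ⁿ`. -/
def U2 (ω : Sample n) : Path n := fun t => c.dec t (c.Y1 ω) (seedW ω t)

end Design

/-- `(P, S)` is an achievable pair of costs for causal encoding and causal decoding: for every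
`ε > 0` there is `n₀` such that for every blocklength `n ≥ n₀` some control design makes the
expected cost deviation `E[|P - c_P(U₁ⁿ)| + |S - c_S(X₁ⁿ, U₂ⁿ)|]` at most `ε`.
This defines the region `R_ed`. -/
def achievable (Q N : ℝ≥0) (P S : ℝ) : Prop :=
  ∀ ε > (0 : ℝ), ∃ n₀ : ℕ, ∀ n ≥ n₀, ∃ c : Design n,
    (∫⁻ ω, ENNReal.ofReal
        (|P - costP (c.U1 ω)| + |S - costS (c.X1 ω) (c.U2 ω)|) ∂(base n Q N))
      ≤ ENNReal.ofReal ε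

/-- The control sequence generated recursively by a feedback encoder: at each time `t < n`,
`U_{1,t}` is produced from the source `x`, the past channel outputs
`Y_{1,s} = X_{0,s} + U_{1,s} + Z_{1,s}` for `s < t` (the strict prefix, padded by `0`), and
the seed `v t`. -/
def fbCtrl {n : ℕ} (enc : Fin n → Path n → Path n → ℝ → ℝ)
    (x z v : Path n) (t : ℕ) : ℝ :=
  if ht : t < n then
    enc ⟨t, ht⟩ x
      (fun s : Fin n => if hs : (s : ℕ) < t then x s + fbCtrl enc x z v s + z s else 0)
      (v ⟨t, ht⟩)
  else 0
termination_by t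
decreasing_by exact hs

/-- A control design with causal encoder with (strictly causal) channel feedback and causal
decoder: at time `t` the stochastic encoder `f^{f,t}` observes `(X₀^t, Y₁^{t-1})` and the
stochastic decoder `g^t` observes `Y₁^t`. -/
structure FBDesign (n : ℕ) where
  enc : Fin n → Path n → Path n → ℝ → ℝ
  dec : Fin n → Path n → ℝ → ℝ
  enc_meas : ∀ t, Measurable fun p : (Path n × Path n) × ℝ => enc t p.1.1 p.1.2 p.2
  dec_meas : ∀ t, Measurable fun p : Path n × ℝ => dec t p.1 p.2
  /-- the encoder observes the source causally and the channel output strictly causally -/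
  enc_causal : ∀ (t : Fin n) (x x' y y' : Path n) (v : ℝ),
    (∀ s, s ≤ t → x s = x' s) → (∀ s, s < t → y s = y' s) →
      enc t x y v = enc t x' y' v
  /-- causal decoding -/
  dec_causal : ∀ (t : Fin n) (y y' : Path n) (w : ℝ),
    (∀ s, s ≤ t → y s = y' s) → dec t y w = dec t y' w

namespace FBDesign

variable {n : ℕ} (c : FBDesign n)

/-- The control sequence `U₁ⁿ` (defined recursively through the feedback loop). -/
def U1 (ω : Sample n) : Path n := fun t => fbCtrl c.enc (srcX0 ω) (noiseZ ω) (seedV ω) t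
/-- The interim state `X₁ⁿ = X₀ⁿ + U₁ⁿ`. -/
def X1 (ω : Sample n) : Path n := fun t => srcX0 ω t + c.U1 ω t
/-- The channel output `Y₁ⁿ = X₁ⁿ + Z₁ⁿ`. -/
def Y1 (ω : Sample n) : Path n := fun t => c.X1 ω t + noiseZ ω t
/-- The estimate sequence `U₂ⁿ`. -/
def U2 (ω : Sample n) : Path n := fun t => c.dec t (c.Y1 ω) (seedW ω t)

end FBDesign

/-- The region `R_{ed,f}`: achievable pairs of costs for causal encoding with channel feedback
and causal decoding. -/
def achievableFB (Q N : ℝ≥0) (P S : ℝ) : Prop :=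
  ∀ ε > (0 : ℝ), ∃ n₀ : ℕ, ∀ n ≥ n₀, ∃ c : FBDesign n,
    (∫⁻ ω, ENNReal.ofReal
        (|P - costP (c.U1 ω)| + |S - costS (c.X1 ω) (c.U2 ω)|) ∂(base n Q N))
      ≤ ENNReal.ofReal ε

/-- A control design with causal encoder with (strictly causal) channel feedback and causal
decoder with (strictly causal) source feed-forward: at time `t` the encoder observes
`(X₀^t, Y₁^{t-1})` and the decoder observes `(Y₁^t, X₀^{t-1})`. -/
structure FBFFDesign (n : ℕ) where
  enc : Fin n → Path n → Path n → ℝ → ℝ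
  dec : Fin n → Path n → Path n → ℝ → ℝ
  enc_meas : ∀ t, Measurable fun p : (Path n × Path n) × ℝ => enc t p.1.1 p.1.2 p.2
  dec_meas : ∀ t, Measurable fun p : (Path n × Path n) × ℝ => dec t p.1.1 p.1.2 p.2
  /-- the encoder observes the source causally and the channel output strictly causally -/
  enc_causal : ∀ (t : Fin n) (x x' y y' : Path n) (v : ℝ),
    (∀ s, s ≤ t → x s = x' s) → (∀ s, s < t → y s = y' s) →
      enc t x y v = enc t x' y' v
  /-- the decoder observes the channel output causally and the source strictly causally -/
  dec_causal : ∀ (t : Fin n) (y y' x x' : Path n) (w : ℝ),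
    (∀ s, s ≤ t → y s = y' s) → (∀ s, s < t → x s = x' s) →
      dec t y x w = dec t y' x' w

namespace FBFFDesign

variable {n : ℕ} (c : FBFFDesign n)

/-- The control sequence `U₁ⁿ` (defined recursively through the feedback loop). -/
def U1 (ω : Sample n) : Path n := fun t => fbCtrl c.enc (srcX0 ω) (noiseZ ω) (seedV ω) t
/-- The interim state `X₁ⁿ = X₀ⁿ + U₁ⁿ`. -/
def X1 (ω : Sample n) : Path n := fun t => srcX0 ω t + c.U1 ω t
/-- The channel output `Y₁ⁿ = X₁ⁿ + Z₁ⁿ`. -/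
def Y1 (ω : Sample n) : Path n := fun t => c.X1 ω t + noiseZ ω t
/-- The estimate sequence `U₂ⁿ`. -/
def U2 (ω : Sample n) : Path n := fun t => c.dec t (c.Y1 ω) (srcX0 ω) (seedW ω t)

end FBFFDesign

/-- The region `R_{ed,f,f}`: achievable pairs of costs with channel feedback at the encoder
and source feed-forward at the decoder. -/
def achievableFBFF (Q N : ℝ≥0) (P S : ℝ) : Prop :=
  ∀ ε > (0 : ℝ), ∃ n₀ : ℕ, ∀ n ≥ n₀, ∃ c : FBFFDesign n,
    (∫⁻ ω, ENNReal.ofReal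
        (|P - costP (c.U1 ω)| + |S - costS (c.X1 ω) (c.U2 ω)|) ∂(base n Q N))
      ≤ ENNReal.ofReal ε

/-!
Only `R_{ed,f,f} ⊆ R_ed` needs an argument; it is time sharing followed by derandomization. Take a
design with feedback and feed-forward of blocklength `m`. Draw an index `K` uniformly in `Fin m` and
an independent sample `σ` of the randomness of the block of length `m`, and let encoder and decoder
play the stage `K` of the design, using `σ` for the strict past and the current source, noise and
seeds at time `K`. The feedback and the feed-forward only concern the past, which is now a parameter
known to both sides, so this is a memoryless scheme without either of them, and its expected stage
cost is the expected block cost of the original design. Repeat the scheme with i.i.d. parameters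
`(K, σ)`: by the `L¹` law of large numbers the average cost concentrates around that mean, hence it
does so for some deterministic sequence of parameters, which turns the scheme into a design.
-/

section LawOfLargeNumbers

open Filter Function
open scoped Topology

variable {α E : Type*} [MeasurableSpace α] [NormedAddCommGroup E] [NormedSpace ℝ E]

theorem aemeasurable_edist_average {ρ : Measure α} [SigmaFinite ρ] {h : α → E}
    (hh : AEStronglyMeasurable h ρ) (n : ℕ) (p : E) :
    AEMeasurable (fun s : Fin n → α => edist ((n : ℝ)⁻¹ • ∑ i, h (s i)) p)
      (Measure.pi fun _ => ρ) := by
  have heval (i : Fin n) :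
      AEStronglyMeasurable (fun s : Fin n → α => h (s i)) (Measure.pi fun _ => ρ) :=
    hh.comp_quasiMeasurePreserving (Measure.quasiMeasurePreserving_eval _ i)
  exact ((Finset.univ.aestronglyMeasurable_fun_sum fun i _ => heval i).const_smul _).edist
    aestronglyMeasurable_const

theorem tendsto_lintegral_edist_average [CompleteSpace E] (ρ : Measure α) [IsProbabilityMeasure ρ]
    {h : α → E} (hh : Integrable h ρ) :
    Tendsto (fun n : ℕ => ∫⁻ s : Fin n → α, edist ((n : ℝ)⁻¹ • ∑ i, h (s i)) (∫ a, h a ∂ρ)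
      ∂Measure.pi fun _ => ρ) atTop (𝓝 0) := by
  borelize E
  obtain ⟨Ω, _, Pr, X, hX, hlaw, hindep, _⟩ := exists_iid ℕ ρ
  have hlp : MemLp (h ∘ X 0) 1 Pr := memLp_one_iff_integrable.2
    (((hlaw 0).measurePreserving (hX 0)).integrable_comp_of_integrable hh)
  have hmean : ∫ ω, h (X 0 ω) ∂Pr = ∫ a, h a ∂ρ := (hlaw 0).integral_comp hh.1
  have hmap (i : ℕ) : AEMeasurable h (Pr.map (X i)) :=
    (hlaw i).map_eq.symm ▸ hh.1.aemeasurable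
  have hpair : Pairwise ((· ⟂ᵢ[Pr] ·) on fun i => h ∘ X i) := fun i j hij =>
    (hindep.indepFun hij).comp₀ (hX i).aemeasurable (hX j).aemeasurable (hmap i) (hmap j)
  have hident (i : ℕ) : IdentDistrib (h ∘ X i) (h ∘ X 0) Pr Pr :=
    ((hlaw i).identDistrib (hlaw 0)).comp_of_aemeasurable (hmap i)
  refine (strong_law_Lp le_rfl ENNReal.one_ne_top _ hlp hpair hident).congr fun n => ?_
  have hblock : HasLaw (fun ω (i : Fin n) => X i ω) (Measure.pi fun _ => ρ) Pr :=
    (hindep.precomp Fin.val_injective).hasLaw_pi fun i => hlaw i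
  rw [← hblock.lintegral_comp (aemeasurable_edist_average hh.1 n _),
    eLpNorm_one_eq_lintegral_enorm]
  refine lintegral_congr fun ω => ?_
  simp only [comp_apply, hmean, edist_eq_enorm_sub,
    Fin.sum_univ_eq_sum_range fun i => h (X i ω)]

theorem eventually_exists_lintegral_edist_average_le {β : Type*} [MeasurableSpace β]
    [CompleteSpace E] (ν : Measure α) (μ : Measure β) [IsProbabilityMeasure ν]
    [IsProbabilityMeasure μ] {h : α × β → E} (hh : Integrable h (ν.prod μ)) {ε : ℝ≥0∞}
    (hε : 0 < ε) :
    ∀ᶠ n : ℕ in atTop, ∃ w : Fin n → α, ∫⁻ s : Fin n → β,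
      edist ((n : ℝ)⁻¹ • ∑ i, h (w i, s i)) (∫ a, h a ∂ν.prod μ) ∂Measure.pi (fun _ => μ) ≤ ε := by
  filter_upwards [(tendsto_lintegral_edist_average (ν.prod μ) hh).eventually (ge_mem_nhds hε)]
    with n hn
  have hzip := (measurePreserving_arrowProdEquivProdArrow α β (Fin n) (fun _ => ν)
    (fun _ => μ)).symm
  have hmeas : AEMeasurable (fun p : (Fin n → α) × (Fin n → β) =>
      edist ((n : ℝ)⁻¹ • ∑ i, h (p.1 i, p.2 i)) (∫ a, h a ∂ν.prod μ))
      ((Measure.pi fun _ => ν).prod (Measure.pi fun _ => μ)) :=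
    (aemeasurable_edist_average hh.1 n _).comp_quasiMeasurePreserving
      hzip.quasiMeasurePreserving
  rw [← hzip.lintegral_comp_emb (MeasurableEquiv.measurableEmbedding _)] at hn
  replace hn := (lintegral_prod _ hmeas).symm.trans_le hn
  obtain ⟨w, hw⟩ := exists_le_lintegral hmeas.lintegral_prod_right'
  exact ⟨w, hw.trans hn⟩

end LawOfLargeNumbers

section Resampling

theorem measurePreserving_update_pi {ι : Type*} [Fintype ι] [DecidableEq ι] {α : ι → Type*}
    [∀ i, MeasurableSpace (α i)] (μ : ∀ i, Measure (α i)) [∀ i, SigmaFinite (μ i)] (k : ι)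
    [IsProbabilityMeasure (μ k)] :
    MeasurePreserving (fun p : (∀ i, α i) × α k => Function.update p.1 k p.2)
      ((Measure.pi μ).prod (μ k)) (Measure.pi μ) := by
  have hmeas : Measurable fun p : (∀ i, α i) × α k => Function.update p.1 k p.2 := by fun_prop
  refine ⟨hmeas, (Measure.pi_eq fun s hs => ?_).symm⟩
  have hpre : (fun p : (∀ i, α i) × α k => Function.update p.1 k p.2) ⁻¹' Set.univ.pi s
      = Set.univ.pi (Function.update s k Set.univ) ×ˢ s k := by
    ext p
    simp only [Set.mem_preimage, Set.mem_prod, Set.mem_univ_pi]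
    rw [Function.forall_update_iff p.1 fun i x => x ∈ s i,
      Function.forall_update_iff s fun i t => p.1 i ∈ t]
    simp [and_comm]
  rw [Measure.map_apply hmeas (.univ_pi hs), hpre, Measure.prod_prod, Measure.pi_pi,
    ← Finset.prod_erase_mul _ _ (Finset.mem_univ k),
    ← Finset.prod_erase_mul _ (fun i => μ i (s i)) (Finset.mem_univ k),
    Function.update_self, measure_univ, mul_one]
  congr 1
  exact Finset.prod_congr rfl fun i hi => by rw [Function.update_of_ne (Finset.ne_of_mem_erase hi)]

variable {ι α E : Type*}

/-- An index together with a family in which the value at that index is replaced by a fresh one. -/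
def resample [DecidableEq ι] (p : (ι × (ι → α)) × α) : ι × (ι → α) :=
  (p.1.1, Function.update p.1.2 p.1.1 p.2)

variable [MeasurableSpace ι] [MeasurableSpace α]

theorem measurePreserving_resample [Fintype ι] [DecidableEq ι] [MeasurableSingletonClass ι]
    (u : Measure ι) [SFinite u] (μ : Measure α) [IsProbabilityMeasure μ] :
    MeasurePreserving (resample (ι := ι)) ((u.prod (Measure.pi fun _ => μ)).prod μ)
      (u.prod (Measure.pi fun _ => μ)) :=
  have hupdate (k : ι) := measurePreserving_update_pi (fun _ : ι => μ) k
  ((MeasurePreserving.id u).skew_product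
    (measurable_from_prod_countable_right fun k => (hupdate k).measurable)
    (.of_forall fun k => (hupdate k).map_eq)).comp (measurePreserving_prodAssoc u _ μ)

variable [NormedAddCommGroup E] [MeasurableSpace E] [BorelSpace E] [SecondCountableTopology E]
  [MeasurableSingletonClass ι] {π : Measure α} [SFinite π] {F : ι → α → E}

theorem integrable_uncurry_of_finite [Finite ι] {u : Measure ι} [IsFiniteMeasure u]
    (hF : ∀ k, Measurable (F k)) (hFi : ∀ k, Integrable (F k) π) :
    Integrable (Function.uncurry F) (u.prod π) :=
  (integrable_prod_iff (measurable_from_prod_countable_right hF).aestronglyMeasurable).2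
    ⟨.of_forall hFi, .of_finite⟩

theorem integral_uncurry_uniformOfFintype [Fintype ι] [Nonempty ι] [NormedSpace ℝ E]
    [CompleteSpace E] (hF : ∀ k, Measurable (F k)) (hFi : ∀ k, Integrable (F k) π) :
    ∫ p, Function.uncurry F p ∂(PMF.uniformOfFintype ι).toMeasure.prod π
      = ∫ a, (Fintype.card ι : ℝ)⁻¹ • ∑ k, F k a ∂π := by
  rw [integral_prod _ (integrable_uncurry_of_finite hF hFi), PMF.integral_eq_sum, integral_smul,
    integral_finsetSum _ fun k _ => hFi k, Finset.smul_sum]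
  simp [Function.uncurry]

end Resampling

section Integrability

variable {α : Type*} [MeasurableSpace α] {μ : Measure α}

theorem integrable_of_lintegral_edist_const_ne_top {E : Type*} [NormedAddCommGroup E]
    [IsFiniteMeasure μ] {f : α → E} (hf : AEStronglyMeasurable f μ) {p : E}
    (h : ∫⁻ a, edist (f a) p ∂μ ≠ ∞) : Integrable f μ := by
  have hsub : Integrable (fun a => f a - p) μ :=
    ⟨hf.sub aestronglyMeasurable_const, by
      simpa only [HasFiniteIntegral, ← edist_eq_enorm_sub] using h.lt_top⟩
  exact (hsub.add (integrable_const p)).congr (.of_forall fun a => sub_add_cancel (f a) p)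

theorem edist_integral_const_le_lintegral_edist {E : Type*} [NormedAddCommGroup E]
    [NormedSpace ℝ E] [CompleteSpace E] [IsProbabilityMeasure μ] {f : α → E} (hf : Integrable f μ)
    (p : E) : edist (∫ a, f a ∂μ) p ≤ ∫⁻ a, edist (f a) p ∂μ := by
  simpa using edist_integral_le_lintegral_edist hf (integrable_const p)

theorem integrable_of_integrable_sum_of_nonneg {ι : Type*} [Fintype ι] {f : ι → α → ℝ} {k : ι}
    (hf : AEStronglyMeasurable (f k) μ) (hnonneg : ∀ i a, 0 ≤ f i a)
    (hsum : Integrable (fun a => ∑ i, f i a) μ) : Integrable (f k) μ :=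
  hsum.mono' hf <| .of_forall fun a => by
    rw [Real.norm_of_nonneg (hnonneg k a)]
    exact Finset.single_le_sum (fun i _ => hnonneg i a) (Finset.mem_univ k)

end Integrability

section Letters

/-- The randomness of a single time instant: source, noise, encoder seed and decoder seed. -/
abbrev Letter : Type := ℝ × ℝ × ℝ × ℝ

/-- The law of the randomness of a single time instant. -/
def letterLaw (Q N : ℝ≥0) : Measure Letter :=
  (gaussianReal 0 Q).prod ((gaussianReal 0 N).prod ((gaussianReal 0 1).prod (gaussianReal 0 1)))

instance (Q N : ℝ≥0) : IsProbabilityMeasure (letterLaw Q N) := by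
  unfold letterLaw; infer_instance

variable {n : ℕ}

/-- A sequence of letters, transposed into a sample of the whole block. -/
def ofLetters (s : Fin n → Letter) : Sample n :=
  (fun i => (s i).1, fun i => (s i).2.1, fun i => (s i).2.2.1, fun i => (s i).2.2.2)

@[simp]
theorem srcX0_ofLetters (s : Fin n → Letter) (t : Fin n) : srcX0 (ofLetters s) t = (s t).1 := rfl

@[simp]
theorem noiseZ_ofLetters (s : Fin n → Letter) (t : Fin n) : noiseZ (ofLetters s) t = (s t).2.1 :=
  rfl

@[simp]
theorem seedV_ofLetters (s : Fin n → Letter) (t : Fin n) : seedV (ofLetters s) t = (s t).2.2.1 :=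
  rfl

@[simp]
theorem seedW_ofLetters (s : Fin n → Letter) (t : Fin n) : seedW (ofLetters s) t = (s t).2.2.2 :=
  rfl

theorem measurePreserving_ofLetters (n : ℕ) (Q N : ℝ≥0) :
    MeasurePreserving (ofLetters (n := n)) (Measure.pi fun _ => letterLaw Q N) (base n Q N) :=
  have hseeds := measurePreserving_arrowProdEquivProdArrow ℝ ℝ (Fin n)
    (fun _ => gaussianReal 0 1) (fun _ => gaussianReal 0 1)
  have hnoise := measurePreserving_arrowProdEquivProdArrow ℝ (ℝ × ℝ) (Fin n)
    (fun _ => gaussianReal 0 N) (fun _ => (gaussianReal 0 1).prod (gaussianReal 0 1))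
  have hsource := measurePreserving_arrowProdEquivProdArrow ℝ (ℝ × ℝ × ℝ) (Fin n)
    (fun _ => gaussianReal 0 Q)
    (fun _ => (gaussianReal 0 N).prod ((gaussianReal 0 1).prod (gaussianReal 0 1)))
  ((MeasurePreserving.id _).prod (((MeasurePreserving.id _).prod hseeds).comp hnoise)).comp hsource

@[fun_prop]
theorem measurable_ofLetters : Measurable (ofLetters (n := n)) := by
  unfold ofLetters
  fun_prop

@[fun_prop]
theorem measurable_srcX0 : Measurable (srcX0 (n := n)) := measurable_fst

@[fun_prop]
theorem measurable_noiseZ : Measurable (noiseZ (n := n)) := measurable_snd.fst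

end Letters

section Costs

/-- The pair of the input cost and the estimation cost of a design. -/
def Design.cost {n : ℕ} (c : Design n) (ω : Sample n) : ℝ × ℝ :=
  (costP (c.U1 ω), costS (c.X1 ω) (c.U2 ω))

namespace FBFFDesign

variable {m : ℕ} (c : FBFFDesign m)

/-- The pair of the input cost and the estimation cost of a design with feedback and
feed-forward. -/
def cost (ω : Sample m) : ℝ × ℝ := (costP (c.U1 ω), costS (c.X1 ω) (c.U2 ω))

/-- The contribution of time `k` to the costs of a block, before normalization by `m`. -/
def stageCost (k : Fin m) (s : Fin m → Letter) : ℝ × ℝ :=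
  ((c.U1 (ofLetters s) k) ^ 2, (c.X1 (ofLetters s) k - c.U2 (ofLetters s) k) ^ 2)

theorem cost_ofLetters (s : Fin m → Letter) :
    c.cost (ofLetters s) = (m : ℝ)⁻¹ • ∑ k, c.stageCost k s := by
  ext <;> simp [cost, costP, costS, stageCost, Prod.fst_sum, Prod.snd_sum]

end FBFFDesign

theorem edist_le_ofReal_abs_sub_add_abs_sub (a b P S : ℝ) :
    edist (a, b) (P, S) ≤ ENNReal.ofReal (|P - a| + |S - b|) := by
  rw [edist_comm, edist_dist, Prod.dist_eq, Real.dist_eq, Real.dist_eq]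
  exact ENNReal.ofReal_le_ofReal (max_le_add_of_nonneg (abs_nonneg _) (abs_nonneg _))

theorem ofReal_abs_sub_add_abs_sub_le (a b P S : ℝ) :
    ENNReal.ofReal (|P - a| + |S - b|) ≤ 2 * edist (a, b) (P, S) := by
  rw [ENNReal.ofReal_add (abs_nonneg _) (abs_nonneg _), two_mul, ← Real.dist_eq, ← Real.dist_eq,
    ← edist_dist, ← edist_dist, edist_comm (a, b)]
  exact add_le_add (le_max_left _ _) (le_max_right _ _)

end Costs

namespace FBFFDesign

variable {m : ℕ} (c : FBFFDesign m)

section Measurability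

theorem U1_eq_enc (ω : Sample m) (t : Fin m) :
    c.U1 ω t = c.enc t (srcX0 ω) (fun s => if s < t then c.Y1 ω s else 0) (seedV ω t) := by
  rw [U1, fbCtrl, dif_pos t.2]
  rfl

theorem measurable_U1_apply (t : Fin m) : Measurable fun ω => c.U1 ω t := by
  induction t using WellFoundedLT.induction with
  | ind t ih =>
    have hpast : Measurable fun ω (s : Fin m) => if s < t then c.Y1 ω s else 0 :=
      measurable_pi_lambda _ fun s => by
        split_ifs with hs
        · have := ih s hs
          unfold Y1 X1
          fun_prop
        · exact measurable_const
    simp only [U1_eq_enc]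
    exact (c.enc_meas t).comp ((measurable_srcX0.prodMk hpast).prodMk (by fun_prop))

@[fun_prop]
theorem measurable_U1 : Measurable c.U1 := measurable_pi_lambda _ c.measurable_U1_apply

@[fun_prop]
theorem measurable_X1 : Measurable c.X1 := by
  unfold X1
  fun_prop

@[fun_prop]
theorem measurable_Y1 : Measurable c.Y1 := by
  unfold Y1
  fun_prop

@[fun_prop]
theorem measurable_U2 : Measurable c.U2 :=
  measurable_pi_lambda _ fun t =>
    (c.dec_meas t).comp ((c.measurable_Y1.prodMk measurable_srcX0).prodMk (by fun_prop))

theorem measurable_cost : Measurable c.cost := by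
  unfold cost costP costS
  fun_prop

theorem measurable_stageCost (k : Fin m) : Measurable (c.stageCost k) := by
  unfold stageCost
  fun_prop

end Measurability

section Causality

variable {c} {s s' : Fin m → Letter} {t : Fin m}

theorem U1_ofLetters_congr (past : ∀ r < t, s r = s' r) (source : (s t).1 = (s' t).1)
    (seed : (s t).2.2.1 = (s' t).2.2.1) : c.U1 (ofLetters s) t = c.U1 (ofLetters s') t := by
  induction t using WellFoundedLT.induction with
  | ind t ih =>
    have hU1 : ∀ r < t, c.U1 (ofLetters s) r = c.U1 (ofLetters s') r := fun r hr =>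
      ih r hr (fun q hq => past q (hq.trans hr)) (by rw [past r hr]) (by rw [past r hr])
    rw [U1_eq_enc, U1_eq_enc, seedV_ofLetters, seedV_ofLetters, seed]
    refine c.enc_causal _ _ _ _ _ _ (fun r hr => ?_) fun r hr => ?_
    · rcases hr.lt_or_eq with hr | rfl
      · simp [past r hr]
      · simpa using source
    · simp [hr, Y1, X1, hU1 r hr, past r hr]

theorem Y1_ofLetters_congr (h : ∀ r ≤ t, s r = s' r) :
    c.Y1 (ofLetters s) t = c.Y1 (ofLetters s') t := by
  have hU1 : c.U1 (ofLetters s) t = c.U1 (ofLetters s') t :=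
    U1_ofLetters_congr (fun r hr => h r hr.le) (by rw [h t le_rfl]) (by rw [h t le_rfl])
  simp [Y1, X1, hU1, h t le_rfl]

end Causality

section Memoryless

/-- The design that plays at time `t` the stage `(w t).1` of the design with feedback and
feed-forward `c`, on the past frozen to `(w t).2`. The entries of the current letter that the
encoder does not observe are set to `0`. -/
def memoryless {n : ℕ} (w : Fin n → Fin m × (Fin m → Letter)) : Design n where
  enc t x v := c.U1 (ofLetters (resample (w t, (x t, 0, v, 0))).2) (w t).1
  dec t y r := c.dec (w t).1 (Function.update (c.Y1 (ofLetters (w t).2)) (w t).1 (y t))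
    (srcX0 (ofLetters (w t).2)) r
  enc_meas t := by
    change Measurable fun p : Path n × ℝ =>
      c.U1 (ofLetters (Function.update (w t).2 (w t).1 (p.1 t, 0, p.2, 0))) (w t).1
    fun_prop
  dec_meas t :=
    have hout : Measurable fun p : Path n × ℝ =>
        Function.update (c.Y1 (ofLetters (w t).2)) (w t).1 (p.1 t) := by fun_prop
    (c.dec_meas (w t).1).comp ((hout.prodMk measurable_const).prodMk measurable_snd)
  enc_causal t x x' v h := by simp only [h t le_rfl]
  dec_causal t y y' r h := by simp only [h t le_rfl]

variable {n : ℕ} (w : Fin n → Fin m × (Fin m → Letter)) (s : Fin n → Letter) (t : Fin n)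

theorem memoryless_U1 : (c.memoryless w).U1 (ofLetters s) t
    = c.U1 (ofLetters (resample (w t, s t)).2) (w t).1 :=
  U1_ofLetters_congr (fun r hr => by simp [resample, hr.ne]) (by simp [resample])
    (by simp [resample])

theorem memoryless_X1 : (c.memoryless w).X1 (ofLetters s) t
    = c.X1 (ofLetters (resample (w t, s t)).2) (w t).1 := by
  simp [Design.X1, X1, memoryless_U1, resample]

theorem memoryless_Y1 : (c.memoryless w).Y1 (ofLetters s) t
    = c.Y1 (ofLetters (resample (w t, s t)).2) (w t).1 := by
  simp [Design.Y1, Y1, memoryless_X1, resample]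

theorem memoryless_U2 : (c.memoryless w).U2 (ofLetters s) t
    = c.U2 (ofLetters (resample (w t, s t)).2) (w t).1 := by
  have hseed : seedW (ofLetters s) t = seedW (ofLetters (resample (w t, s t)).2) (w t).1 := by
    simp [resample]
  rw [Design.U2, U2, hseed]
  refine c.dec_causal _ _ _ _ _ _ (fun r hr => ?_) fun r hr => by simp [resample, hr.ne]
  rcases hr.lt_or_eq with hr | rfl
  · rw [Function.update_of_ne hr.ne]
    exact Y1_ofLetters_congr fun q hq => by simp [resample, (hq.trans_lt hr).ne]
  · rw [Function.update_self, memoryless_Y1]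

theorem cost_memoryless : (c.memoryless w).cost (ofLetters s)
    = (n : ℝ)⁻¹ • ∑ t, Function.uncurry c.stageCost (resample (w t, s t)) := by
  ext <;> simp [Design.cost, costP, costS, stageCost, memoryless_U1, memoryless_X1, memoryless_U2,
    Function.uncurry, Prod.fst_sum, Prod.snd_sum, resample]

end Memoryless

section TimeSharing

variable {c} {Q N : ℝ≥0}

theorem integrable_stageCost (hc : Integrable c.cost (base m Q N)) (k : Fin m) :
    Integrable (c.stageCost k) (Measure.pi fun _ => letterLaw Q N) := by
  have hm : (m : ℝ) ≠ 0 := Nat.cast_ne_zero.2 k.pos.ne'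
  have hsum : Integrable (fun s => ∑ k, c.stageCost k s) (Measure.pi fun _ => letterLaw Q N) := by
    refine (((measurePreserving_ofLetters m Q N).integrable_comp_of_integrable hc).smul
      (m : ℝ)).congr (.of_forall fun s => ?_)
    simp only [Pi.smul_apply, Function.comp_apply, cost_ofLetters, smul_inv_smul₀ hm]
  have hmeas := c.measurable_stageCost k
  exact .prodMk
    (integrable_of_integrable_sum_of_nonneg (f := fun k s => (c.stageCost k s).1)
      hmeas.fst.aestronglyMeasurable (fun _ _ => sq_nonneg _)
      (by simpa only [Prod.fst_sum] using hsum.fst))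
    (integrable_of_integrable_sum_of_nonneg (f := fun k s => (c.stageCost k s).2)
      hmeas.snd.aestronglyMeasurable (fun _ _ => sq_nonneg _)
      (by simpa only [Prod.snd_sum] using hsum.snd))

variable [NeZero m]

/-- The law of the parameters of time sharing: a uniform index and an independent block. -/
def timeSharingLaw (m : ℕ) [NeZero m] (Q N : ℝ≥0) : Measure (Fin m × (Fin m → Letter)) :=
  (PMF.uniformOfFintype (Fin m)).toMeasure.prod (Measure.pi fun _ => letterLaw Q N)

instance : IsProbabilityMeasure (timeSharingLaw m Q N) := by
  unfold timeSharingLaw; infer_instance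

theorem integrable_uncurry_stageCost (hc : Integrable c.cost (base m Q N)) :
    Integrable (Function.uncurry c.stageCost) (timeSharingLaw m Q N) :=
  integrable_uncurry_of_finite c.measurable_stageCost (integrable_stageCost hc)

theorem integral_uncurry_stageCost (hc : Integrable c.cost (base m Q N)) :
    ∫ p, Function.uncurry c.stageCost p ∂timeSharingLaw m Q N = ∫ ω, c.cost ω ∂base m Q N := by
  rw [timeSharingLaw,
    integral_uncurry_uniformOfFintype c.measurable_stageCost (integrable_stageCost hc),
    ← (measurePreserving_ofLetters m Q N).hasLaw.integral_comp hc.1]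
  simp only [Function.comp_apply, cost_ofLetters, Fintype.card_fin]

theorem eventually_exists_design_lintegral_edist_cost_le {p : ℝ × ℝ}
    (hc : ∫⁻ ω, edist (c.cost ω) p ∂base m Q N ≠ ∞) {ε : ℝ≥0∞} (hε : 0 < ε) :
    ∀ᶠ n in Filter.atTop, ∃ d : Design n,
      ∫⁻ ω, edist (d.cost ω) p ∂base n Q N ≤ ε + ∫⁻ ω, edist (c.cost ω) p ∂base m Q N := by
  have hcost := integrable_of_lintegral_edist_const_ne_top
    c.measurable_cost.aestronglyMeasurable hc
  have hstage := integrable_uncurry_stageCost hcost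
  have hresample : MeasurePreserving resample ((timeSharingLaw m Q N).prod (letterLaw Q N))
      (timeSharingLaw m Q N) := measurePreserving_resample _ _
  have hmean : ∫ q, Function.uncurry c.stageCost (resample q)
      ∂(timeSharingLaw m Q N).prod (letterLaw Q N) = ∫ ω, c.cost ω ∂base m Q N :=
    (hresample.hasLaw.integral_comp hstage.1).trans (integral_uncurry_stageCost hcost)
  filter_upwards [eventually_exists_lintegral_edist_average_le _ _
    (hresample.integrable_comp_of_integrable hstage) hε] with n ⟨w, hw⟩
  refine ⟨c.memoryless w, ?_⟩
  simp only [Function.comp_apply, hmean] at hw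
  calc ∫⁻ ω, edist ((c.memoryless w).cost ω) p ∂base n Q N
      ≤ ∫⁻ s, edist ((c.memoryless w).cost (ofLetters s)) p
          ∂Measure.pi fun _ => letterLaw Q N := by
        rw [← (measurePreserving_ofLetters n Q N).map_eq]
        exact lintegral_map_le _ _
    _ ≤ ∫⁻ s, (edist ((c.memoryless w).cost (ofLetters s)) (∫ ω, c.cost ω ∂base m Q N)
          + edist (∫ ω, c.cost ω ∂base m Q N) p) ∂Measure.pi fun _ => letterLaw Q N :=
        lintegral_mono fun _ => edist_triangle _ _ _
    _ = ∫⁻ s, edist ((c.memoryless w).cost (ofLetters s)) (∫ ω, c.cost ω ∂base m Q N)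
          ∂(Measure.pi fun _ => letterLaw Q N) + edist (∫ ω, c.cost ω ∂base m Q N) p := by
        rw [lintegral_add_right _ measurable_const, lintegral_const, measure_univ, mul_one]
    _ ≤ ε + ∫⁻ ω, edist (c.cost ω) p ∂base m Q N := by
        simp only [cost_memoryless]
        exact add_le_add hw (edist_integral_const_le_lintegral_edist hcost p)

end TimeSharing

end FBFFDesign

section Regions

/-- A design without feedback, regarded as a design whose encoder ignores the feedback. -/
def Design.toFBDesign {n : ℕ} (c : Design n) : FBDesign n where
  enc t x _ v := c.enc t x v
  dec := c.dec
  enc_meas t := (c.enc_meas t).comp (measurable_fst.fst.prodMk measurable_snd)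
  dec_meas := c.dec_meas
  enc_causal t x x' _ _ v hx _ := c.enc_causal t x x' v hx
  dec_causal := c.dec_causal

theorem Design.toFBDesign_U1 {n : ℕ} (c : Design n) : c.toFBDesign.U1 = c.U1 := by
  ext ω t
  rw [FBDesign.U1, fbCtrl, dif_pos t.2]
  rfl

theorem Design.toFBDesign_X1 {n : ℕ} (c : Design n) : c.toFBDesign.X1 = c.X1 := by
  ext ω t
  rw [FBDesign.X1, toFBDesign_U1, X1]

theorem Design.toFBDesign_U2 {n : ℕ} (c : Design n) : c.toFBDesign.U2 = c.U2 := by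
  have hY1 : c.toFBDesign.Y1 = c.Y1 := by
    ext ω t
    rw [FBDesign.Y1, toFBDesign_X1, Y1]
  ext ω t
  rw [FBDesign.U2, hY1]
  rfl

/-- A design without feed-forward, regarded as a design whose decoder ignores the source. -/
def FBDesign.toFBFFDesign {n : ℕ} (c : FBDesign n) : FBFFDesign n where
  enc := c.enc
  dec t y _ w := c.dec t y w
  enc_meas := c.enc_meas
  dec_meas t := (c.dec_meas t).comp (measurable_fst.fst.prodMk measurable_snd)
  enc_causal := c.enc_causal
  dec_causal t y y' _ _ w hy _ := c.dec_causal t y y' w hy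

variable {Q N : ℝ≥0} {P S : ℝ}

theorem achievableFB_of_achievable (h : achievable Q N P S) : achievableFB Q N P S := fun ε hε =>
  (h ε hε).imp fun _ hn₀ n hn => (hn₀ n hn).imp' Design.toFBDesign fun c hc => by
    rwa [c.toFBDesign_U1, c.toFBDesign_X1, c.toFBDesign_U2]

theorem achievableFBFF_of_achievableFB (h : achievableFB Q N P S) : achievableFBFF Q N P S :=
  fun ε hε => (h ε hε).imp fun _ hn₀ n hn => (hn₀ n hn).imp' FBDesign.toFBFFDesign fun _ hc => hc

theorem achievable_of_achievableFBFF (h : achievableFBFF Q N P S) : achievable Q N P S := by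
  intro ε hε
  have hε4 : 0 < ENNReal.ofReal (ε / 4) := ENNReal.ofReal_pos.2 (by positivity)
  obtain ⟨m, hm⟩ := h (ε / 4) (by positivity)
  obtain ⟨c, hc⟩ := hm (m + 1) m.le_succ
  have hcost : ∫⁻ ω, edist (c.cost ω) (P, S) ∂base (m + 1) Q N ≤ ENNReal.ofReal (ε / 4) :=
    (lintegral_mono fun _ => edist_le_ofReal_abs_sub_add_abs_sub _ _ _ _).trans hc
  obtain ⟨n₀, hn₀⟩ := Filter.eventually_atTop.1
    (FBFFDesign.eventually_exists_design_lintegral_edist_cost_le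
      (ne_top_of_le_ne_top ENNReal.ofReal_ne_top hcost) hε4)
  refine ⟨n₀, fun n hn => (hn₀ n hn).imp fun d hd => ?_⟩
  calc ∫⁻ ω, ENNReal.ofReal (|P - costP (d.U1 ω)| + |S - costS (d.X1 ω) (d.U2 ω)|) ∂base n Q N
      ≤ ∫⁻ ω, 2 * edist (d.cost ω) (P, S) ∂base n Q N :=
        lintegral_mono fun _ => ofReal_abs_sub_add_abs_sub_le _ _ _ _
    _ = 2 * ∫⁻ ω, edist (d.cost ω) (P, S) ∂base n Q N :=
        lintegral_const_mul' _ _ ENNReal.ofNat_ne_top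
    _ ≤ 2 * (ENNReal.ofReal (ε / 4) + ENNReal.ofReal (ε / 4)) := by
        gcongr
        exact hd.trans (by gcongr)
    _ = ENNReal.ofReal ε := by
        rw [← ENNReal.ofReal_add (by positivity) (by positivity), ← ENNReal.ofReal_ofNat,
          ← ENNReal.ofReal_mul (by positivity)]
        ring_nf

end Regions

/-- **Genie-aided equality** (Appendix B): the region `R_{ed,f,f}` of achievable cost pairs
when the causal encoder has strictly causal channel feedback `Y₁^{t-1}` and the causal decoder
additionally receives the strictly causal source feed-forward `X₀^{t-1}` equals the region
`R_ed` without feedback or feed-forward.  In particular `R_ed ⊆ R_{ed,f} ⊆ R_{ed,f,f}`, so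
adding channel feedback and source feed-forward does not enlarge the achievable region. -/
theorem genie_aided_region_eq (Q N : ℝ≥0) (hQ : 0 < Q) (hN : 0 < N) :
    (∀ P S : ℝ, achievableFBFF Q N P S ↔ achievable Q N P S) ∧
    (∀ P S : ℝ, achievable Q N P S → achievableFB Q N P S) ∧
    (∀ P S : ℝ, achievableFB Q N P S → achievableFBFF Q N P S) :=
  ⟨fun _ _ => ⟨achievable_of_achievableFBFF,
      fun h => achievableFBFF_of_achievableFB (achievableFB_of_achievable h)⟩,
    fun _ _ => achievableFB_of_achievable, fun _ _ => achievableFBFF_of_achievableFB⟩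

end

end Witsenhausen
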